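/- arXiv:1901.02768 — 3 statements merged into one kernel-verified Lean document; each statement's English description precedes it below -/
import Mathlib

section
/- The Hessian of the logistic loss is Lipschitz continuous with constant γ_x = 12 λ_x max_{1≤i≤n} ‖x_i‖₁: for all z₁, z₂ ∈ ℝ^p, ‖∇²ℓ(z₁) − ∇²ℓ(z₂)‖_F ≤ γ_x ‖z₁ − z₂‖, where ‖·‖_F is the Frobenius norm of a matrix. -/
open scoped RealInnerProductSpace BigOperators
open Matrix

/-!
Write `σ` for the sigmoid, so that `n ∇²ℓ(z) = Xᵀ diag(σ'(⟨xᵢ, z⟩)) X`. For `z₁` and `z₂` the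
diagonal matrices differ by `diag d`, and `σ'` being `1/4`-Lipschitz gives
`‖d‖₂ ≤ ‖X (z₁ - z₂)‖₂ / 4`.
Estimating the left factor `Xᵀ` in operator norm and the rest in Frobenius norm,
`‖Xᵀ diag(d) X‖_F ≤ ‖X‖ ‖diag(d) X‖_F ≤ ‖X‖ ‖d‖₂ maxᵢ ‖xᵢ‖₂ ≤ ‖X‖² maxᵢ ‖xᵢ‖₂ ‖z₁ - z₂‖ / 4`.
Since `‖X‖² = λ_max(XᵀX)` and `‖xᵢ‖₂ ≤ ‖xᵢ‖₁`, this is stronger than the claim by a factor of `12`.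
-/

open WithLp
open scoped NNReal Matrix.Norms.L2Operator

/- The argument mixes two matrix norms, so only one of them can be an instance: `‖A‖` is the
operator norm with respect to the Euclidean norms. -/
local notation "‖" A "‖_F" => @Norm.norm _ Matrix.frobeniusSeminormedAddCommGroup.toNorm A

lemma norm_toLp_two_le_sum_norm {𝕜 n : Type*} [RCLike 𝕜] [Fintype n] (x : n → 𝕜) :
    ‖toLp 2 x‖ ≤ ∑ i, ‖x i‖ := by
  rw [EuclideanSpace.norm_eq]
  exact Real.sqrt_le_iff.mpr
    ⟨by positivity, Finset.sum_sq_le_sq_sum_of_nonneg fun i _ ↦ norm_nonneg (x i)⟩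

section FrobeniusNorm

variable {𝕜 l m n : Type*} [RCLike 𝕜] [Fintype l] [Fintype m] [Fintype n]

lemma frobenius_norm_nonneg {α : Type*} [SeminormedAddCommGroup α] (A : Matrix m n α) :
    0 ≤ ‖A‖_F :=
  @norm_nonneg _ Matrix.frobeniusSeminormedAddCommGroup.toSeminormedAddGroup A

lemma frobenius_norm_smul {R α : Type*} [SeminormedRing R] [SeminormedAddCommGroup α] [Module R α]
    [NormSMulClass R α] (r : R) (A : Matrix m n α) : ‖r • A‖_F = ‖r‖ * ‖A‖_F :=
  Matrix.frobeniusNormSMulClass.norm_smul r A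

lemma frobenius_norm_eq_sqrt {α : Type*} [SeminormedAddCommGroup α] (A : Matrix m n α) :
    ‖A‖_F = √(∑ i, ∑ j, ‖A i j‖ ^ 2) := by
  rw [frobenius_norm_def, Real.sqrt_eq_rpow]
  simp only [Real.rpow_ofNat]

lemma frobenius_norm_sq_eq_sum_row (A : Matrix m n 𝕜) :
    ‖A‖_F ^ 2 = ∑ i, ‖toLp 2 (A.row i)‖ ^ 2 := by
  rw [frobenius_norm_eq_sqrt, Real.sq_sqrt (by positivity)]
  simp only [EuclideanSpace.norm_sq_eq, row_apply]

lemma frobenius_norm_sq_eq_sum_col (A : Matrix m n 𝕜) :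
    ‖A‖_F ^ 2 = ∑ j, ‖toLp 2 (A.col j)‖ ^ 2 := by
  simpa only [frobenius_norm_transpose, row_transpose] using frobenius_norm_sq_eq_sum_row Aᵀ

lemma frobenius_norm_mul_le_l2_opNorm_mul [DecidableEq m] (A : Matrix l m 𝕜) (B : Matrix m n 𝕜) :
    ‖A * B‖_F ≤ ‖A‖ * ‖B‖_F := by
  have hcol (j : n) : ‖toLp 2 ((A * B).col j)‖ ≤ ‖A‖ * ‖toLp 2 (B.col j)‖ :=
    l2_opNorm_mulVec A (toLp 2 (B.col j))
  refine le_of_sq_le_sq ?_ (mul_nonneg (norm_nonneg A) (frobenius_norm_nonneg B))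
  calc ‖A * B‖_F ^ 2 = ∑ j, ‖toLp 2 ((A * B).col j)‖ ^ 2 := frobenius_norm_sq_eq_sum_col _
    _ ≤ ∑ j, (‖A‖ * ‖toLp 2 (B.col j)‖) ^ 2 := by
      gcongr with j
      exact hcol j
    _ = (‖A‖ * ‖B‖_F) ^ 2 := by
      simp only [mul_pow, frobenius_norm_sq_eq_sum_col, Finset.mul_sum]

lemma frobenius_norm_diagonal_mul_le [DecidableEq m] (d : m → 𝕜) (X : Matrix m n 𝕜) :
    ‖diagonal d * X‖_F ≤ ‖toLp 2 d‖ * ⨆ i, ‖toLp 2 (X.row i)‖ := by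
  set c := ⨆ i, ‖toLp 2 (X.row i)‖
  have hc : 0 ≤ c := Real.iSup_nonneg fun i ↦ norm_nonneg _
  have hrow (i : m) : ‖toLp 2 ((diagonal d * X).row i)‖ ≤ ‖d i‖ * c := by
    have hsmul : (diagonal d * X).row i = d i • X.row i := by
      ext j
      exact diagonal_mul d X i j
    rw [hsmul, toLp_smul, norm_smul]
    gcongr
    exact le_ciSup (f := fun i ↦ ‖toLp 2 (X.row i)‖) (Set.finite_range _).bddAbove i
  refine le_of_sq_le_sq ?_ (mul_nonneg (norm_nonneg _) hc)
  calc ‖diagonal d * X‖_F ^ 2 = ∑ i, ‖toLp 2 ((diagonal d * X).row i)‖ ^ 2 :=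
      frobenius_norm_sq_eq_sum_row _
    _ ≤ ∑ i, (‖d i‖ * c) ^ 2 := by
      gcongr with i
      exact hrow i
    _ = (‖toLp 2 d‖ * c) ^ 2 := by
      simp only [mul_pow, EuclideanSpace.norm_sq_eq, Finset.sum_mul]

lemma frobenius_norm_conjTranspose_mul_diagonal_mul_le [DecidableEq m] [DecidableEq n]
    (d : m → 𝕜) (X : Matrix m n 𝕜) :
    ‖Xᴴ * diagonal d * X‖_F ≤ ‖X‖ * (‖toLp 2 d‖ * ⨆ i, ‖toLp 2 (X.row i)‖) := by
  rw [Matrix.mul_assoc, ← l2_opNorm_conjTranspose X]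
  exact (frobenius_norm_mul_le_l2_opNorm_mul _ _).trans <|
    mul_le_mul_of_nonneg_left (frobenius_norm_diagonal_mul_le d X) (norm_nonneg _)

end FrobeniusNorm

section Eigenvalues

open scoped ComplexOrder

variable {𝕜 m n : Type*} [RCLike 𝕜] [Fintype m] [Fintype n] [DecidableEq n]

lemma l2_opNorm_eq_norm_eigenvalues {A : Matrix n n 𝕜} (hA : A.IsHermitian) :
    ‖A‖ = ‖hA.eigenvalues‖ := by
  conv_lhs => rw [hA.spectral_theorem]
  rw [Unitary.conjStarAlgAut_apply, ← Unitary.coe_star, CStarRing.norm_mul_coe_unitary,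
    CStarRing.norm_coe_unitary_mul, l2_opNorm_diagonal]
  simp only [Pi.norm_def, Function.comp_apply, ← RCLike.algebraMap_eq_ofReal, nnnorm_algebraMap']

lemma l2_opNorm_eq_iSup_eigenvalues {A : Matrix n n 𝕜} (hA : A.PosSemidef) :
    ‖A‖ = ⨆ i, hA.isHermitian.eigenvalues i := by
  have hnorm (i : n) : ‖hA.isHermitian.eigenvalues i‖ = hA.isHermitian.eigenvalues i :=
    Real.norm_of_nonneg (hA.eigenvalues_nonneg i)
  rw [l2_opNorm_eq_norm_eigenvalues hA.isHermitian]
  apply le_antisymm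
  · refine (pi_norm_le_iff_of_nonneg (Real.iSup_nonneg hA.eigenvalues_nonneg)).mpr fun i ↦ ?_
    rw [hnorm]
    exact le_ciSup (Set.finite_range _).bddAbove i
  · exact Real.iSup_le (fun i ↦ (hnorm i).symm.trans_le (norm_le_pi_norm _ i)) (norm_nonneg _)

lemma l2_opNorm_sq_eq_iSup_eigenvalues {X : Matrix m n 𝕜} (hX : (Xᴴ * X).IsHermitian) :
    ‖X‖ ^ 2 = ⨆ i, hX.eigenvalues i := by
  rw [sq, ← l2_opNorm_conjTranspose_mul_self]
  exact l2_opNorm_eq_iSup_eigenvalues (posSemidef_conjTranspose_mul_self X)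

end Eigenvalues

lemma deriv_sigmoid_eq_exp_div (t : ℝ) :
    deriv Real.sigmoid t = Real.exp t / (1 + Real.exp t) ^ 2 := by
  simp only [Real.deriv_sigmoid, Real.sigmoid_def, Real.exp_neg]
  field

lemma hasDerivAt_deriv_sigmoid (t : ℝ) :
    HasDerivAt (deriv Real.sigmoid)
      (Real.sigmoid t * (1 - Real.sigmoid t) * (1 - 2 * Real.sigmoid t)) t := by
  have hσ := Real.hasDerivAt_sigmoid t
  rw [Real.deriv_sigmoid]
  exact (hσ.mul (hσ.const_sub 1)).congr_deriv (by ring)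

lemma lipschitzWith_deriv_sigmoid : LipschitzWith 4⁻¹ (deriv Real.sigmoid) := by
  refine lipschitzWith_of_nnnorm_deriv_le
    (fun t ↦ (hasDerivAt_deriv_sigmoid t).differentiableAt) fun t ↦ ?_
  rw [(hasDerivAt_deriv_sigmoid t).deriv, ← NNReal.coe_le_coe, coe_nnnorm]
  set s := Real.sigmoid t
  have hs₀ : 0 ≤ s := Real.sigmoid_nonneg t
  have hs₁ : s ≤ 1 := Real.sigmoid_le_one t
  calc ‖s * (1 - s) * (1 - 2 * s)‖ = s * (1 - s) * |1 - 2 * s| := by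
        rw [norm_mul, Real.norm_of_nonneg (mul_nonneg hs₀ (sub_nonneg.mpr hs₁)), Real.norm_eq_abs]
    _ ≤ 4⁻¹ * 1 := by
        gcongr
        · linarith [sq_nonneg (1 - 2 * s)]
        · exact abs_le.mpr ⟨by linarith, by linarith⟩
    _ = (4⁻¹ : ℝ≥0) := by norm_num

section GLMHessian

variable {m n : Type*} [Fintype m] [Fintype n]

/-- The Hessian `Xᵀ diag(φ(⟨xᵢ, z⟩)) X` of `z ↦ ∑ᵢ f(⟨xᵢ, z⟩)`, where `φ = f''` and the `xᵢ` are the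
rows of `X`: the unnormalized loss Hessian of a generalized linear model. The logistic loss has
`φ = σ'`. -/
noncomputable def glmHessian [DecidableEq m] (φ : ℝ → ℝ) (X : Matrix m n ℝ)
    (z : EuclideanSpace ℝ n) : Matrix n n ℝ :=
  Xᵀ * diagonal (fun i ↦ φ ((X *ᵥ z) i)) * X

variable [DecidableEq n]

lemma norm_toLp_comp_mulVec_sub_le {φ : ℝ → ℝ} {K : ℝ≥0} (hφ : LipschitzWith K φ)
    (X : Matrix m n ℝ) (z₁ z₂ : EuclideanSpace ℝ n) :
    ‖toLp 2 fun i ↦ φ ((X *ᵥ z₁) i) - φ ((X *ᵥ z₂) i)‖ ≤ K * (‖X‖ * ‖z₁ - z₂‖) := by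
  have hcoord (i : m) :
      ‖φ ((X *ᵥ z₁) i) - φ ((X *ᵥ z₂) i)‖ ≤ K * ‖(X *ᵥ (z₁ - z₂)) i‖ := by
    simpa only [mulVec_sub, Pi.sub_apply] using hφ.norm_sub_le ((X *ᵥ z₁) i) ((X *ᵥ z₂) i)
  calc ‖toLp 2 fun i ↦ φ ((X *ᵥ z₁) i) - φ ((X *ᵥ z₂) i)‖
      ≤ K * ‖toLp 2 (X *ᵥ (z₁ - z₂))‖ := by
        refine le_of_sq_le_sq ?_ (by positivity)
        simp only [mul_pow, EuclideanSpace.norm_sq_eq, Finset.mul_sum]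
        gcongr with i
        rw [← mul_pow]
        gcongr
        exact hcoord i
    _ ≤ K * (‖X‖ * ‖z₁ - z₂‖) := by
        gcongr
        exact l2_opNorm_mulVec X (z₁ - z₂)

theorem frobenius_norm_glmHessian_sub_le [DecidableEq m] {φ : ℝ → ℝ} {K : ℝ≥0}
    (hφ : LipschitzWith K φ) (X : Matrix m n ℝ) (z₁ z₂ : EuclideanSpace ℝ n) :
    ‖glmHessian φ X z₁ - glmHessian φ X z₂‖_F ≤
      K * ‖X‖ ^ 2 * (⨆ i, ‖toLp 2 (X.row i)‖) * ‖z₁ - z₂‖ := by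
  set c := ⨆ i, ‖toLp 2 (X.row i)‖
  have hc : 0 ≤ c := Real.iSup_nonneg fun i ↦ norm_nonneg _
  set d : m → ℝ := fun i ↦ φ ((X *ᵥ z₁) i) - φ ((X *ᵥ z₂) i)
  have hsub : glmHessian φ X z₁ - glmHessian φ X z₂ = Xᴴ * diagonal d * X := by
    rw [glmHessian, glmHessian, ← Matrix.sub_mul, ← Matrix.mul_sub, diagonal_sub,
      conjTranspose_eq_transpose_of_trivial]
  calc ‖glmHessian φ X z₁ - glmHessian φ X z₂‖_F
      ≤ ‖X‖ * (‖toLp 2 d‖ * c) := by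
        rw [hsub]
        exact frobenius_norm_conjTranspose_mul_diagonal_mul_le d X
    _ ≤ ‖X‖ * (K * (‖X‖ * ‖z₁ - z₂‖) * c) := by
        gcongr
        exact norm_toLp_comp_mulVec_sub_le hφ X z₁ z₂
    _ = K * ‖X‖ ^ 2 * c * ‖z₁ - z₂‖ := by ring

end GLMHessian

/-- The Hessian `∇²ℓ(z) = Xᵀ D(z) X / n` of the logistic loss is
Lipschitz continuous in the Frobenius norm with constant
`γ_x = 12 λ_x max_{1≤i≤n} ‖xᵢ‖₁`. -/
theorem logistic_loss_hessian_lipschitz (n p : ℕ) (hn : 0 < n) (hp : 0 < p)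
    (X : Matrix (Fin n) (Fin p) ℝ) (y : Fin n → ℝ)
    (hy : ∀ i, y i = 0 ∨ y i = 1)
    (D : EuclideanSpace ℝ (Fin p) → Matrix (Fin n) (Fin n) ℝ)
    (hD : ∀ z, D z = Matrix.diagonal (fun i =>
      Real.exp (∑ j, X i j * z j) / (1 + Real.exp (∑ j, X i j * z j)) ^ 2))
    (H : EuclideanSpace ℝ (Fin p) → Matrix (Fin p) (Fin p) ℝ)
    (hHz : ∀ z, H z = (n : ℝ)⁻¹ • (Xᵀ * D z * X))
    (hH : (Xᵀ * X).IsHermitian)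
    (lamx : ℝ) (hlamx : lamx = (⨆ i, hH.eigenvalues i) / (4 * n))
    (gamx : ℝ) (hgamx : gamx = 12 * lamx * ⨆ i : Fin n, ∑ j, |X i j|) :
    ∀ z₁ z₂ : EuclideanSpace ℝ (Fin p),
      Real.sqrt (∑ a, ∑ b, (H z₁ a b - H z₂ a b) ^ 2) ≤ gamx * ‖z₁ - z₂‖ := by
  intro z₁ z₂
  have hHess (z) : H z = (n : ℝ)⁻¹ • glmHessian (deriv Real.sigmoid) X z := by
    simp only [hHz, hD, glmHessian, deriv_sigmoid_eq_exp_div, mulVec, dotProduct]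
  have hX : ‖X‖ ^ 2 = ⨆ i, hH.eigenvalues i := l2_opNorm_sq_eq_iSup_eigenvalues hH
  set c := ⨆ i, ∑ j, |X i j|
  have hc : 0 ≤ c := Real.iSup_nonneg fun i ↦ by positivity
  have hrow : ⨆ i, ‖toLp 2 (X.row i)‖ ≤ c :=
    ciSup_mono (Set.finite_range _).bddAbove fun i ↦ norm_toLp_two_le_sum_norm (X i)
  calc √(∑ a, ∑ b, (H z₁ a b - H z₂ a b) ^ 2) = ‖H z₁ - H z₂‖_F := by
        simp only [frobenius_norm_eq_sqrt, Matrix.sub_apply, Real.norm_eq_abs, sq_abs]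
    _ = (n : ℝ)⁻¹ * ‖glmHessian (deriv Real.sigmoid) X z₁
          - glmHessian (deriv Real.sigmoid) X z₂‖_F := by
        rw [hHess, hHess, ← smul_sub, frobenius_norm_smul, norm_inv, RCLike.norm_natCast]
    _ ≤ (n : ℝ)⁻¹ * (4⁻¹ * ‖X‖ ^ 2 * c * ‖z₁ - z₂‖) := by
        grw [frobenius_norm_glmHessian_sub_le lipschitzWith_deriv_sigmoid, hrow]
        simp
    _ = lamx * c * ‖z₁ - z₂‖ := by rw [hlamx, ← hX]; ring
    _ ≤ gamx * ‖z₁ - z₂‖ := by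
        have hlamx_nonneg : 0 ≤ lamx := by rw [hlamx, ← hX]; positivity
        rw [hgamx]
        gcongr
        linarith
end

section
/- For every z ∈ ℝ^p, ℓ(z) ≤ (ln 2 − 1/4) + ‖Xz − c‖²/(4n), where c = 2y − 1 (the vector with entries 2y_i − 1 ∈ {−1, 1}). Consequently 0 ≤ inf_{z ∈ S} ℓ(z) ≤ (ln 2 − 1/4) + inf_{z ∈ S} ‖Xz − c‖²/(4n). -/
open scoped RealInnerProductSpace BigOperators
open Matrix

/-- The number of nonzero entries of a vector (the ℓ₀ "norm"). -/
noncomputable def norm0 {p : ℕ} (z : EuclideanSpace ℝ (Fin p)) : ℕ :=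
  {i | z i ≠ 0}.ncard

/-!
Factoring `1 + exp t = 2 * exp (t / 2) * cosh (t / 2)` and using `cosh x ≤ exp (x ^ 2 / 2)` gives
`log (1 + exp t) ≤ log 2 + t / 2 + t ^ 2 / 8`. Weakening `t ^ 2 / 8` to `t ^ 2 / 4` makes the bound
on `log (1 + exp t) - y * t` a complete square around the signed label `2 * y - 1`, which has
square `1`. Averaging over the samples bounds the loss, and as the loss is nonnegative, the bound
passes to infima.
-/

section LogOneAddExp

theorem one_add_exp_eq_two_mul_exp_half_mul_cosh_half (t : ℝ) :
    1 + Real.exp t = 2 * Real.exp (t / 2) * Real.cosh (t / 2) := by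
  have exp_half_sq : Real.exp (t / 2) * Real.exp (t / 2) = Real.exp t := by
    rw [← Real.exp_add, add_halves]
  have exp_half_mul_exp_neg_half : Real.exp (t / 2) * Real.exp (-(t / 2)) = 1 := by
    rw [← Real.exp_add, add_neg_cancel, Real.exp_zero]
  rw [Real.cosh_eq]
  linear_combination -exp_half_sq - exp_half_mul_exp_neg_half

theorem log_cosh_le_half_sq (x : ℝ) : Real.log (Real.cosh x) ≤ x ^ 2 / 2 :=
  (Real.log_le_iff_le_exp (Real.cosh_pos x)).2 (Real.cosh_le_exp_half_sq x)

theorem log_one_add_exp_le (t : ℝ) :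
    Real.log (1 + Real.exp t) ≤ Real.log 2 + t / 2 + t ^ 2 / 8 := by
  calc Real.log (1 + Real.exp t)
      = Real.log 2 + t / 2 + Real.log (Real.cosh (t / 2)) := by
        rw [one_add_exp_eq_two_mul_exp_half_mul_cosh_half,
          Real.log_mul (by positivity) (Real.cosh_pos _).ne',
          Real.log_mul two_ne_zero (Real.exp_ne_zero _), Real.log_exp]
    _ ≤ Real.log 2 + t / 2 + (t / 2) ^ 2 / 2 := by
        gcongr
        exact log_cosh_le_half_sq (t / 2)
    _ = Real.log 2 + t / 2 + t ^ 2 / 8 := by ring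

theorem log_one_add_exp_sub_mul_le {y : ℝ} (hy : 1 ≤ (2 * y - 1) ^ 2) (t : ℝ) :
    Real.log (1 + Real.exp t) - y * t ≤ Real.log 2 - 1 / 4 + (t - (2 * y - 1)) ^ 2 / 4 := by
  linarith [log_one_add_exp_le t, sq_nonneg t]

theorem mul_le_log_one_add_exp {y : ℝ} (hy₀ : 0 ≤ y) (hy₁ : y ≤ 1) (t : ℝ) :
    y * t ≤ Real.log (1 + Real.exp t) := by
  have le_log : t ≤ Real.log (1 + Real.exp t) :=
    (Real.le_log_iff_exp_le (by positivity)).2 (le_add_of_nonneg_left zero_le_one)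
  have log_nonneg : 0 ≤ Real.log (1 + Real.exp t) :=
    Real.log_nonneg (le_add_of_nonneg_right (Real.exp_nonneg t))
  exact (mul_le_mul_of_nonneg_left le_log hy₀).trans (mul_le_of_le_one_left log_nonneg hy₁)

end LogOneAddExp

section LogisticLoss

variable {ι E : Type*} [Fintype ι] {y : ι → ℝ}

/-- The average logistic loss of the predictor values `u` against the labels `y`. A linear model
with sample matrix `X` and parameter `z` has `u = X z`, so `fun z ↦ logisticLoss y (X z)` is the
loss `ℓ` of logistic regression. -/
noncomputable def logisticLoss (y u : ι → ℝ) : ℝ :=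
  (1 / (Fintype.card ι : ℝ)) * ∑ i, (Real.log (1 + Real.exp (u i)) - y i * u i)

theorem logisticLoss_nonneg (hy₀ : ∀ i, 0 ≤ y i) (hy₁ : ∀ i, y i ≤ 1) (u : ι → ℝ) :
    0 ≤ logisticLoss y u :=
  mul_nonneg (by positivity) <| Finset.sum_nonneg fun i _ ↦
    sub_nonneg.2 (mul_le_log_one_add_exp (hy₀ i) (hy₁ i) (u i))

variable [Nonempty ι]

theorem logisticLoss_le (hy : ∀ i, 1 ≤ (2 * y i - 1) ^ 2) (u : ι → ℝ) :
    logisticLoss y u ≤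
      Real.log 2 - 1 / 4 + (∑ i, (u i - (2 * y i - 1)) ^ 2) / (4 * (Fintype.card ι : ℝ)) := by
  calc logisticLoss y u
      ≤ (1 / (Fintype.card ι : ℝ)) *
          ∑ i, (Real.log 2 - 1 / 4 + (u i - (2 * y i - 1)) ^ 2 / 4) := by
        unfold logisticLoss
        gcongr with i
        exact log_one_add_exp_sub_mul_le (hy i) (u i)
    _ = Real.log 2 - 1 / 4 + (∑ i, (u i - (2 * y i - 1)) ^ 2) / (4 * (Fintype.card ι : ℝ)) := by
        rw [Finset.sum_add_distrib, Finset.sum_const, Finset.card_univ, nsmul_eq_mul,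
          ← Finset.sum_div]
        field_simp

theorem logistic_loss_linear_bound_general (hy : ∀ i, y i = 0 ∨ y i = 1) (u : E → ι → ℝ)
    {S : Set E} (hS : S.Nonempty) :
    (∀ z, logisticLoss y (u z) ≤
        Real.log 2 - 1 / 4 + (∑ i, (u z i - (2 * y i - 1)) ^ 2) / (4 * (Fintype.card ι : ℝ))) ∧
    0 ≤ (⨅ z : S, logisticLoss y (u z)) ∧
    (⨅ z : S, logisticLoss y (u z)) ≤
      Real.log 2 - 1 / 4 +
        ⨅ z : S, (∑ i, (u z i - (2 * y i - 1)) ^ 2) / (4 * (Fintype.card ι : ℝ)) := by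
  have loss_le (z : E) := logisticLoss_le (y := y)
    (fun i ↦ by rcases hy i with h | h <;> norm_num [h]) (u z)
  have loss_nonneg (z : E) : 0 ≤ logisticLoss y (u z) :=
    logisticLoss_nonneg (fun i ↦ by rcases hy i with h | h <;> simp [h])
      (fun i ↦ by rcases hy i with h | h <;> simp [h]) (u z)
  have loss_bddBelow : BddBelow (Set.range fun z : S ↦ logisticLoss y (u z)) :=
    ⟨0, Set.forall_mem_range.2 fun z ↦ loss_nonneg z⟩
  have : Nonempty S := hS.to_subtype
  exact ⟨loss_le, Real.iInf_nonneg fun z ↦ loss_nonneg z,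
    le_add_ciInf fun z ↦ (ciInf_le loss_bddBelow z).trans (loss_le z)⟩

end LogisticLoss

/-- For every `z`, `ℓ(z) ≤ (ln 2 − 1/4) + ‖Xz − c‖²/(4n)` where
`c = 2y − 1`, and consequently
`0 ≤ inf_{z ∈ S} ℓ(z) ≤ (ln 2 − 1/4) + inf_{z ∈ S} ‖Xz − c‖²/(4n)`. -/
theorem logistic_loss_linear_bound (n p s : ℕ) (hn : 0 < n) (hs : 0 < s) (hsp : s < p)
    (X : Matrix (Fin n) (Fin p) ℝ) (y : Fin n → ℝ)
    (hy : ∀ i, y i = 0 ∨ y i = 1)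
    (ℓ : EuclideanSpace ℝ (Fin p) → ℝ)
    (hℓ : ∀ z, ℓ z = (1 / (n : ℝ)) *
      ∑ i, (Real.log (1 + Real.exp (∑ j, X i j * z j)) - y i * (∑ j, X i j * z j)))
    (c : Fin n → ℝ) (hc : ∀ i, c i = 2 * y i - 1) :
    (∀ z : EuclideanSpace ℝ (Fin p),
        ℓ z ≤ (Real.log 2 - 1 / 4) + (∑ i, ((∑ j, X i j * z j) - c i) ^ 2) / (4 * n)) ∧
    0 ≤ (⨅ z : {z : EuclideanSpace ℝ (Fin p) // norm0 z ≤ s}, ℓ z) ∧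
    (⨅ z : {z : EuclideanSpace ℝ (Fin p) // norm0 z ≤ s}, ℓ z) ≤
      (Real.log 2 - 1 / 4) +
        ⨅ z : {z : EuclideanSpace ℝ (Fin p) // norm0 z ≤ s},
          (∑ i, ((∑ j, X i j * z.1 j) - c i) ^ 2) / (4 * n) := by
  have : Nonempty (Fin n) := Fin.pos_iff_nonempty.1 hn
  have zero_sparse : {z : EuclideanSpace ℝ (Fin p) | norm0 z ≤ s}.Nonempty := ⟨0, by simp [norm0]⟩
  have bounds := logistic_loss_linear_bound_general hy
    (fun (z : EuclideanSpace ℝ (Fin p)) i ↦ ∑ j, X i j * z j) zero_sparse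
  simp only [logisticLoss, Fintype.card_fin, ← hℓ, ← hc] at bounds
  exact bounds
end

section
/- If Xᵀc = 0, where c = 2y − 1, then the zero vector is a global minimizer of ℓ over S, i.e., ℓ(0) ≤ ℓ(z) for every z ∈ S; moreover 0 minimizes ‖Xz − c‖² over S. -/
open scoped RealInnerProductSpace BigOperators
open Matrix

/-!
The softplus function `t ↦ log (1 + exp t)` lies above its tangent `log 2 + t / 2` at `0`, so the
`i`-th summand of the loss is at least `log 2 - (c i / 2) * (X z) i`. Since `Xᵀ c = 0`, the vector
`c` is orthogonal to `X z`: the linear terms cancel in the sum, leaving the loss at `0`, and the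
least-squares claim is the Pythagorean identity `‖X z - c‖² = ‖X z‖² + ‖c‖²`.
-/

open Finset Real

theorem log_two_add_half_le_log_one_add_exp (t : ℝ) : log 2 + t / 2 ≤ log (1 + exp t) := by
  have am_gm : 2 * exp (t / 2) ≤ 1 + exp t := by
    simpa [exp_half, sq_sqrt (exp_nonneg t)] using two_mul_le_add_sq 1 (exp (t / 2))
  calc log 2 + t / 2 = log (2 * exp (t / 2)) := by
        rw [log_mul two_ne_zero (exp_ne_zero _), log_exp]
    _ ≤ log (1 + exp t) := log_le_log (by positivity) am_gm

theorem card_mul_log_two_le_sum_log_one_add_exp_sub {ι : Type*} (s : Finset ι) {y t : ι → ℝ}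
    (h : ∑ i ∈ s, (2 * y i - 1) * t i = 0) :
    #s * log 2 ≤ ∑ i ∈ s, (log (1 + exp (t i)) - y i * t i) :=
  calc #s * log 2 = ∑ i ∈ s, (log 2 - (2 * y i - 1) * t i / 2) := by
        rw [sum_sub_distrib, ← sum_div, h, zero_div, sub_zero, sum_const, nsmul_eq_mul]
    _ ≤ ∑ i ∈ s, (log (1 + exp (t i)) - y i * t i) :=
        sum_le_sum fun i _ => by linarith [log_two_add_half_le_log_one_add_exp (t i)]

theorem sum_sub_sq_of_sum_mul_eq_zero {ι R : Type*} [CommRing R] (s : Finset ι) {f g : ι → R}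
    (h : ∑ i ∈ s, f i * g i = 0) :
    ∑ i ∈ s, (f i - g i) ^ 2 = ∑ i ∈ s, f i ^ 2 + ∑ i ∈ s, g i ^ 2 := by
  simp only [sub_sq, mul_assoc, sum_add_distrib, sum_sub_distrib, ← mul_sum, h, mul_zero, sub_zero]

theorem dotProduct_mulVec_eq_zero_of_transpose_mulVec_eq_zero {m k R : Type*} [Fintype m]
    [Fintype k] [NonUnitalCommSemiring R] {X : Matrix m k R} {c : m → R} (h : Xᵀ *ᵥ c = 0)
    (z : k → R) : c ⬝ᵥ X *ᵥ z = 0 := by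
  rw [dotProduct_mulVec, ← mulVec_transpose, h, zero_dotProduct]

theorem zero_global_minimizer_general {m k : Type*} [Fintype m] [Fintype k]
    (X : Matrix m k ℝ) (y : m → ℝ) (ℓ : EuclideanSpace ℝ k → ℝ)
    (hℓ : ∀ z, ℓ z = (1 / (Fintype.card m : ℝ)) *
      ∑ i, (log (1 + exp (∑ j, X i j * z j)) - y i * (∑ j, X i j * z j)))
    (c : m → ℝ) (hc : ∀ i, c i = 2 * y i - 1) (hXc : Xᵀ *ᵥ c = 0) :
    (∀ z, ℓ 0 ≤ ℓ z) ∧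
    (∀ z : EuclideanSpace ℝ k,
      ∑ i, (0 - c i) ^ 2 ≤ ∑ i, ((∑ j, X i j * z j) - c i) ^ 2) := by
  have orthogonal (z : EuclideanSpace ℝ k) : ∑ i, c i * ∑ j, X i j * z j = 0 :=
    dotProduct_mulVec_eq_zero_of_transpose_mulVec_eq_zero hXc z
  refine ⟨fun z => ?_, fun z => ?_⟩
  · calc ℓ 0 = 1 / (Fintype.card m : ℝ) * (Fintype.card m * log 2) := by
          simp [hℓ, one_add_one_eq_two]
      _ ≤ 1 / (Fintype.card m : ℝ) *
            ∑ i, (log (1 + exp (∑ j, X i j * z j)) - y i * (∑ j, X i j * z j)) := by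
          gcongr
          exact card_mul_log_two_le_sum_log_one_add_exp_sub univ
            (by simpa only [hc] using orthogonal z)
      _ = ℓ z := (hℓ z).symm
  · have pythagoras := sum_sub_sq_of_sum_mul_eq_zero univ
      ((sum_congr rfl fun i _ => mul_comm _ _).trans (orthogonal z))
    simp only [zero_sub, neg_sq, pythagoras]
    exact le_add_of_nonneg_left (sum_nonneg fun i _ => sq_nonneg _)

/-- If `Xᵀc = 0` with `c = 2y − 1`, then `0` is a global minimizer
of ℓ over the sparse set `S`, and `0` also minimizes `‖Xz − c‖²` over `S`. -/
theorem zero_global_minimizer (n p s : ℕ) (hn : 0 < n) (hs : 0 < s) (hsp : s < p)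
    (X : Matrix (Fin n) (Fin p) ℝ) (y : Fin n → ℝ)
    (hy : ∀ i, y i = 0 ∨ y i = 1)
    (ℓ : EuclideanSpace ℝ (Fin p) → ℝ)
    (hℓ : ∀ z, ℓ z = (1 / (n : ℝ)) *
      ∑ i, (Real.log (1 + Real.exp (∑ j, X i j * z j)) - y i * (∑ j, X i j * z j)))
    (c : Fin n → ℝ) (hc : ∀ i, c i = 2 * y i - 1)
    (hXc : Xᵀ.mulVec c = 0) :
    (∀ z : EuclideanSpace ℝ (Fin p), norm0 z ≤ s → ℓ 0 ≤ ℓ z) ∧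
    (∀ z : EuclideanSpace ℝ (Fin p), norm0 z ≤ s →
      ∑ i, (0 - c i) ^ 2 ≤ ∑ i, ((∑ j, X i j * z j) - c i) ^ 2) := by
  have h := zero_global_minimizer_general X y ℓ (by simpa only [Fintype.card_fin] using hℓ) c hc hXc
  exact ⟨fun z _ => h.1 z, fun z _ => h.2 z⟩
end
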